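/- For every prime q, every positive integer a, and every real x ≥ e^e, the number of positive integers n ≤ x such that q^a divides λ(n) is O(x·(log log x)/q^a), where λ is the Carmichael function. -/

import Mathlib

/-- The Carmichael lambda function: the exponent of the multiplicative group `(ℤ/nℤ)ˣ`. -/
noncomputable def carmichael (n : ℕ) : ℕ := Monoid.exponent (ZMod n)ˣ


/-- prime-power divisors of the Carmichael function -/
lemma cc_structure {q a n : ℕ} (hq : q.Prime) (ha : 1 ≤ a) (hn : n ≠ 0) (h : q ^ a ∣ carmichael n) :
    q ^ (a + 1) ∣ n ∨ ∃ p, p.Prime ∧ p ∣ n ∧ q ^ a ∣ p - 1 := by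
  have : NeZero n := ⟨hn⟩
  have h1 : carmichael n = ArithmeticFunction.carmichael n :=
    (ArithmeticFunction.carmichael_eq_exponent hn).symm
  rw [h1, ArithmeticFunction.carmichael_factorization] at h
  have key : ∀ s : Finset ℕ, ∀ f : ℕ → ℕ, q ^ a ∣ s.lcm f → ∃ p ∈ s, q ^ a ∣ f p := by
    intro s f
    classical
    induction s using Finset.induction_on with
    | empty =>
      intro h
      simp only [Finset.lcm_empty, Nat.dvd_one, Nat.pow_eq_one] at h
      have := hq.one_lt
      omega
    | insert b s hb ih =>
      intro h
      rw [Finset.lcm_insert] at h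
      by_cases h0 : f b = 0
      · exact ⟨b, by simp, by simp [h0]⟩
      by_cases h0' : s.lcm f = 0
      · obtain ⟨p, hp, hp'⟩ := ih (by simp [h0'])
        exact ⟨p, by simp [hp], hp'⟩
      have h' : q ^ a ∣ Nat.lcm (f b) (s.lcm f) := h
      rw [hq.pow_dvd_iff_le_factorization (Nat.lcm_ne_zero h0 h0'),
        Nat.factorization_lcm h0 h0'] at h'
      simp only [Finsupp.sup_apply, le_sup_iff] at h'
      rcases h' with h' | h'
      · exact ⟨b, by simp, (hq.pow_dvd_iff_le_factorization h0).2 h'⟩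
      · obtain ⟨p, hp, hp'⟩ := ih ((hq.pow_dvd_iff_le_factorization h0').2 h')
        exact ⟨p, by simp [hp], hp'⟩
  obtain ⟨p, hp, hpd⟩ := key _ _ h
  have hpp := Nat.prime_of_mem_primeFactors hp
  have hpn := Nat.dvd_of_mem_primeFactors hp
  have hpos : 0 < n.factorization p := hpp.factorization_pos_of_dvd hn hpn
  have h2 := hpd.trans (ArithmeticFunction.carmichael_dvd_totient _)
  rw [Nat.totient_prime_pow hpp hpos] at h2
  by_cases hpq : p = q
  · left
    subst hpq
    have hc : Nat.Coprime (p ^ a) (p - 1) := by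
      apply Nat.Coprime.pow_left
      rw [Nat.Prime.coprime_iff_not_dvd hpp]
      intro hd
      have := Nat.le_of_dvd (by have := hpp.one_lt; omega) hd
      have := hpp.one_lt
      omega
    have h3 := hc.dvd_of_dvd_mul_right h2
    rw [Nat.pow_dvd_pow_iff_le_right hpp.one_lt] at h3
    rw [hpp.pow_dvd_iff_le_factorization hn]
    omega
  · right
    refine ⟨p, hpp, hpn, ?_⟩
    have hc : Nat.Coprime (q ^ a) (p ^ (n.factorization p - 1)) :=
      Nat.Coprime.pow _ _ ((Nat.coprime_primes hq hpp).2 (Ne.symm hpq))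
    exact hc.dvd_of_dvd_mul_left h2

/-- counting `k` in an interval with `l ∣ 1 + k m`. -/
lemma cc_count {l m : ℕ} (hl : 0 < l) (hlm : Nat.Coprime l m) (N K : ℕ) :
    |(((Finset.Ico N (N + K)).filter (fun k => l ∣ 1 + k * m)).card : ℝ) - K / l| ≤ 1 := by
  obtain ⟨v, hv⟩ : ∃ v : ℕ, ∀ k : ℕ, l ∣ 1 + k * m ↔ k ≡ v [MOD l] := by
    have : NeZero l := ⟨hl.ne'⟩
    have hu : (m : ZMod l) * (m : ZMod l)⁻¹ = 1 := ZMod.coe_mul_inv_eq_one m hlm.symm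
    refine ⟨(-(m : ZMod l)⁻¹).val, fun k => ?_⟩
    rw [← ZMod.natCast_eq_natCast_iff, ← ZMod.natCast_eq_zero_iff]
    simp only [ZMod.natCast_val, ZMod.cast_id', id_eq]
    push_cast
    constructor
    · intro h
      linear_combination (m : ZMod l)⁻¹ * h - (k : ZMod l) * hu
    · intro h
      rw [h]
      linear_combination - hu
  simp_rw [hv]
  have h := Nat.Ico_filter_modEq_card N (N + K) hl v
  have h' : (((Finset.Ico N (N + K)).filter (fun k => k ≡ v [MOD l])).card : ℤ) =
    ⌈((N + K : ℕ) - (v:ℚ)) / (l : ℚ)⌉ - ⌈((N:ℚ) - v) / (l : ℚ)⌉ := by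
    rw [h]
    apply max_eq_left
    rw [sub_nonneg]
    apply Int.ceil_le_ceil
    gcongr
    omega
  have e1 := Int.ceil_lt_add_one (((N + K : ℕ) - (v:ℚ)) / (l : ℚ))
  have e2 := Int.le_ceil (((N + K : ℕ) - (v:ℚ)) / (l : ℚ))
  have e3 := Int.ceil_lt_add_one ((N - (v:ℚ)) / (l : ℚ))
  have e4 := Int.le_ceil ((N - (v:ℚ)) / (l : ℚ))
  have h'' : (((Finset.Ico N (N + K)).filter (fun k => k ≡ v [MOD l])).card : ℚ) =
    ⌈((N + K : ℕ) - (v:ℚ)) / (l : ℚ)⌉ - ⌈((N:ℚ) - v) / (l : ℚ)⌉ := by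
    exact_mod_cast h'
  have e5 : ((N + K : ℕ) - (v:ℚ)) / (l : ℚ) = ((N:ℚ) - v) / (l : ℚ) + K / l := by
    push_cast; ring
  rw [e5] at e1 e2 h''
  have : |(((Finset.Ico N (N + K)).filter (fun k => k ≡ v [MOD l])).card : ℚ) - K / l| ≤ 1 := by
    rw [h'', abs_le]
    constructor <;> linarith
  have h3 := (Rat.cast_le (K := ℝ)).2 this
  push_cast at h3
  exact h3

open ArithmeticFunction in
lemma cc_moebius (f d : ℕ) (hd : 0 < d) (E : Finset ℕ) (hE : ∀ e, e ∣ d → e ∈ E) :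
    (∑ e ∈ E, if f ∣ e ∧ e ∣ d then ((moebius (d / e) : ℤ) : ℝ) else 0) = if f = d then 1 else 0 := by
  rw [← Finset.sum_filter]
  by_cases hfd : f ∣ d
  · obtain ⟨c, rfl⟩ := hfd
    have hf : 0 < f := Nat.pos_of_mul_pos_right hd
    have hc : 0 < c := Nat.pos_of_mul_pos_left hd
    have : E.filter (fun e => f ∣ e ∧ e ∣ f * c) = c.divisors.image (f * ·) := by
      ext e
      simp only [Finset.mem_filter, Finset.mem_image, Nat.mem_divisors]
      constructor
      · rintro ⟨_, ⟨c', rfl⟩, h⟩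
        exact ⟨c', ⟨Nat.dvd_of_mul_dvd_mul_left hf h, hc.ne'⟩, rfl⟩
      · rintro ⟨c', ⟨h, _⟩, rfl⟩
        have := Nat.mul_dvd_mul_left f h
        exact ⟨hE _ this, dvd_mul_right _ _, this⟩
    rw [this, Finset.sum_image (fun x _ y _ h => Nat.eq_of_mul_eq_mul_left hf h)]
    simp_rw [Nat.mul_div_mul_left _ _ hf]
    have h1 := Nat.sum_div_divisors c (fun x => ((moebius x : ℤ) : ℝ))
    rw [h1]
    have h2 : (∑ i ∈ c.divisors, (moebius i : ℤ)) = if c = 1 then 1 else 0 := by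
      have := congrArg (fun F => F c) moebius_mul_coe_zeta
      simp only [coe_mul_zeta_apply, one_apply] at this
      exact this
    have h3 : (f = f * c) ↔ c = 1 := by
      constructor
      · intro h; exact Nat.eq_of_mul_eq_mul_left hf (by omega)
      · rintro rfl; simp
    simp only [h3]
    exact_mod_cast h2
  · rw [if_neg (by rintro rfl; exact hfd dvd_rfl)]
    apply Finset.sum_eq_zero
    intro e he
    simp only [Finset.mem_filter] at he
    exact absurd (he.2.1.trans he.2.2) hfd

open ArithmeticFunction in
/-- The quadratic form of the sieve, diagonalised. -/
lemma cc_sieve {q m R N : ℕ} (hm : ∀ e, ¬ q ∣ e → Nat.Coprime e m) (hm0 : 0 < m) (hR : 1 ≤ R)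
    (hRN : R ≤ N) (hq : q.Prime) (D : Finset ℕ)
    (hD : D = (Finset.Icc 1 R).filter (fun d => ¬ q ∣ d ∧ Squarefree d)) :
    (((Finset.Ico N (N + N)).filter (fun k => (1 + k * m).Prime)).card : ℝ) *
      (∑ d ∈ D, (1 : ℝ) / d) ^ 2 ≤ N * (∑ d ∈ D, (1 : ℝ) / d) + (R : ℝ) ^ 4 := by
  set E := (Finset.Icc 1 R).filter (fun d => ¬ q ∣ d) with hE
  have hDE : D ⊆ E := by
    intro d; rw [hD, hE]; simp only [Finset.mem_filter]; tauto
  have hEpos : ∀ e ∈ E, 0 < e := by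
    intro e he
    simp only [hE, Finset.mem_filter, Finset.mem_Icc] at he; omega
  have hEdiv : ∀ d ∈ E, ∀ e, e ∣ d → e ∈ E := by
    intro d hd e hed
    have hd0 := hEpos d hd
    simp only [hE, Finset.mem_filter, Finset.mem_Icc] at hd ⊢
    exact ⟨⟨Nat.pos_of_dvd_of_pos hed hd0, (Nat.le_of_dvd hd0 hed).trans hd.1.2⟩,
      fun h => hd.2 (h.trans hed)⟩
  set L : ℝ := ∑ d ∈ D, (1 : ℝ) / d with hL
  let g : ℕ → ℝ := fun e => ∑ d ∈ D, if e ∣ d then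
    ((moebius d : ℤ) : ℝ) / d * ((moebius (d / e) : ℤ) : ℝ) else 0
  have hmu : ∀ d, |((moebius d : ℤ) : ℝ)| ≤ 1 := by
    intro d
    have := abs_moebius_le_one (n := d)
    exact_mod_cast this
  -- inversion
  have hA : ∀ f ∈ E, (∑ e ∈ E, if f ∣ e then g e else 0) =
      if f ∈ D then ((moebius f : ℤ) : ℝ) / f else 0 := by
    intro f hf
    have h1 : (∑ e ∈ E, if f ∣ e then g e else 0) = ∑ d ∈ D, ((moebius d : ℤ) : ℝ) / d *
        ∑ e ∈ E, if f ∣ e ∧ e ∣ d then ((moebius (d / e) : ℤ) : ℝ) else 0 := by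
      simp_rw [Finset.mul_sum]
      rw [Finset.sum_comm]
      apply Finset.sum_congr rfl
      intro e he
      by_cases h : f ∣ e
      · simp only [h, if_true, true_and, g]
        apply Finset.sum_congr rfl
        intro d _
        split_ifs <;> simp
      · simp [h]
    rw [h1]
    have h2 : ∀ d ∈ D, ((moebius d : ℤ) : ℝ) / d *
        (∑ e ∈ E, if f ∣ e ∧ e ∣ d then ((moebius (d / e) : ℤ) : ℝ) else 0) =
        if f = d then ((moebius d : ℤ) : ℝ) / d else 0 := by
      intro d hd
      rw [cc_moebius f d (hEpos d (hDE hd)) E (hEdiv d (hDE hd))]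
      split_ifs <;> simp
    rw [Finset.sum_congr rfl h2, Finset.sum_ite_eq]
  -- diagonalisation
  have hB : (∑ e ∈ E, ∑ e' ∈ E, g e * g e' * (Nat.gcd e e' : ℝ)) =
      ∑ f ∈ E, (Nat.totient f : ℝ) * (∑ e ∈ E, if f ∣ e then g e else 0) ^ 2 := by
    have h1 : ∀ e ∈ E, ∀ e' ∈ E, (Nat.gcd e e' : ℝ) =
        ∑ f ∈ E, if f ∣ e ∧ f ∣ e' then (Nat.totient f : ℝ) else 0 := by
      intro e he e' he'
      rw [← Finset.sum_filter]
      have : E.filter (fun f => f ∣ e ∧ f ∣ e') = (Nat.gcd e e').divisors := by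
        ext f
        simp only [Finset.mem_filter, Nat.mem_divisors]
        constructor
        · rintro ⟨_, h, h'⟩
          exact ⟨Nat.dvd_gcd h h', (Nat.gcd_pos_of_pos_left _ (hEpos e he)).ne'⟩
        · rintro ⟨h, _⟩
          exact ⟨hEdiv e he f (h.trans (Nat.gcd_dvd_left _ _)), h.trans (Nat.gcd_dvd_left _ _),
            h.trans (Nat.gcd_dvd_right _ _)⟩
      rw [this]
      exact_mod_cast (Nat.sum_totient (Nat.gcd e e')).symm
    have h2 : (∑ e ∈ E, ∑ e' ∈ E, g e * g e' * (Nat.gcd e e' : ℝ)) =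
        ∑ e ∈ E, ∑ e' ∈ E, ∑ f ∈ E, (Nat.totient f : ℝ) *
          ((if f ∣ e then g e else 0) * (if f ∣ e' then g e' else 0)) := by
      apply Finset.sum_congr rfl; intro e he
      apply Finset.sum_congr rfl; intro e' he'
      rw [h1 e he e' he', Finset.mul_sum]
      apply Finset.sum_congr rfl; intro f _
      by_cases hh : f ∣ e <;> by_cases hh' : f ∣ e' <;> simp [hh, hh']
      ring
    rw [h2]
    simp_rw [sq, Finset.sum_mul_sum, Finset.mul_sum]
    rw [Finset.sum_congr rfl (fun e _ => Finset.sum_comm)]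
    rw [Finset.sum_comm]
  have hmain : (∑ e ∈ E, ∑ e' ∈ E, g e * g e' * (Nat.gcd e e' : ℝ)) ≤ L := by
    rw [hB, Finset.sum_congr rfl (fun f hf => by rw [hA f hf])]
    have : ∀ f ∈ E, (Nat.totient f : ℝ) * (if f ∈ D then ((moebius f : ℤ) : ℝ) / f else 0) ^ 2 ≤
        if f ∈ D then (1 : ℝ) / f else 0 := by
      intro f hf
      have hf0 : (0 : ℝ) < f := by exact_mod_cast hEpos f hf
      split_ifs with h
      · have h1 : (Nat.totient f : ℝ) ≤ f := by exact_mod_cast Nat.totient_le f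
        have h2 : ((moebius f : ℤ) : ℝ) ^ 2 ≤ 1 := by
          rw [← sq_abs]; exact pow_le_one₀ (abs_nonneg _) (hmu f)
        rw [div_pow]
        calc (Nat.totient f : ℝ) * (((moebius f : ℤ) : ℝ) ^ 2 / (f : ℝ) ^ 2)
            ≤ (f : ℝ) * (1 / (f : ℝ) ^ 2) := by gcongr
          _ = 1 / (f : ℝ) := by field_simp
      · simp
    refine (Finset.sum_le_sum this).trans ?_
    rw [← Finset.sum_filter, Finset.filter_mem_eq_inter, Finset.inter_eq_right.2 hDE]
  -- size of the weights
  have hcardD : (D.card : ℝ) ≤ R := by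
    have : D.card ≤ R := by
      rw [hD]; exact (Finset.card_filter_le _ _).trans (by simp)
    exact_mod_cast this
  have hcardE : (E.card : ℝ) ≤ R := by
    have : E.card ≤ R := by
      rw [hE]; exact (Finset.card_filter_le _ _).trans (by simp)
    exact_mod_cast this
  have hlam : ∀ e ∈ E, |(e : ℝ) * g e| ≤ R := by
    intro e he
    have he0 : (0 : ℝ) < e := by exact_mod_cast hEpos e he
    simp only [g, Finset.mul_sum]
    refine (Finset.abs_sum_le_sum_abs _ _).trans ?_
    refine le_trans (Finset.sum_le_sum (g := fun _ => (1 : ℝ)) ?_) (by simpa using hcardD)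
    intro d hd
    have hd0 : (0 : ℝ) < d := by exact_mod_cast hEpos d (hDE hd)
    split_ifs with h
    · have hed : (e : ℝ) ≤ d := by exact_mod_cast Nat.le_of_dvd (hEpos d (hDE hd)) h
      rw [abs_mul, abs_mul, abs_div, abs_of_pos he0, abs_of_pos hd0]
      calc (e : ℝ) * (|((moebius d : ℤ) : ℝ)| / d * |((moebius (d / e) : ℤ) : ℝ)|)
          ≤ d * (1 / d * 1) := by
            gcongr
            · exact hmu _
            · exact hmu _
        _ = 1 := by field_simp
    · simp
  -- the sieve function
  let F : ℕ → ℝ := fun k => ∑ e ∈ E, if e ∣ 1 + k * m then (e : ℝ) * g e else 0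
  have hF : ∀ k ∈ (Finset.Ico N (N + N)).filter (fun k => (1 + k * m).Prime), F k = L := by
    intro k hk
    simp only [Finset.mem_filter, Finset.mem_Ico] at hk
    have h1 : ∀ e ∈ E, (if e ∣ 1 + k * m then (e : ℝ) * g e else 0) =
        if e = 1 then (e : ℝ) * g e else 0 := by
      intro e he
      have he' := he
      simp only [hE, Finset.mem_filter, Finset.mem_Icc] at he'
      have h2 : e ∣ 1 + k * m ↔ e = 1 := by
        constructor
        · intro h
          rcases (Nat.dvd_prime hk.2).1 h with h | h
          · exact h
          · exfalso
            have : k ≤ k * m := Nat.le_mul_of_pos_right _ hm0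
            omega
        · rintro rfl; simp
      simp only [h2]
    have hone : (1 : ℕ) ∈ E := by
      simp only [hE, Finset.mem_filter, Finset.mem_Icc]
      exact ⟨⟨le_rfl, hR⟩, hq.not_dvd_one⟩
    simp only [F]
    rw [Finset.sum_congr rfl h1, Finset.sum_ite_eq' E 1, if_pos hone]
    simp only [g, Nat.cast_one, one_mul, one_dvd, if_true, Nat.div_one, hL]
    apply Finset.sum_congr rfl
    intro d hd
    have hsf : Squarefree d := by
      rw [hD] at hd; simp only [Finset.mem_filter] at hd; exact hd.2.2
    have h3 : ((moebius d : ℤ) : ℝ) ^ 2 = 1 := by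
      exact_mod_cast moebius_sq_eq_one_of_squarefree hsf
    rw [div_mul_eq_mul_div, ← sq, h3]
  clear_value g
  have hlow : (((Finset.Ico N (N + N)).filter (fun k => (1 + k * m).Prime)).card : ℝ) * L ^ 2 ≤
      ∑ k ∈ Finset.Ico N (N + N), F k ^ 2 := by
    rw [← nsmul_eq_mul, ← Finset.sum_const]
    rw [Finset.sum_congr rfl (fun k hk => by rw [← hF k hk])]
    exact Finset.sum_le_sum_of_subset_of_nonneg (Finset.filter_subset _ _)
      (fun _ _ _ => sq_nonneg _)
  refine hlow.trans ?_
  have hexp : ∑ k ∈ Finset.Ico N (N + N), F k ^ 2 = ∑ e ∈ E, ∑ e' ∈ E,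
      ((e : ℝ) * g e) * ((e' : ℝ) * g e') *
        (((Finset.Ico N (N + N)).filter (fun k => Nat.lcm e e' ∣ 1 + k * m)).card : ℝ) := by
    simp_rw [F, sq, Finset.sum_mul_sum]
    rw [Finset.sum_comm]
    apply Finset.sum_congr rfl; intro e _
    rw [Finset.sum_comm]
    apply Finset.sum_congr rfl; intro e' _
    rw [Finset.card_filter, Nat.cast_sum, Finset.mul_sum]
    apply Finset.sum_congr rfl; intro k _
    simp only [Nat.lcm_dvd_iff]
    by_cases hh : e ∣ 1 + k * m <;> by_cases hh' : e' ∣ 1 + k * m <;> simp [hh, hh']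
  rw [hexp]
  have hterm : ∀ e ∈ E, ∀ e' ∈ E, ((e : ℝ) * g e) * ((e' : ℝ) * g e') *
        (((Finset.Ico N (N + N)).filter (fun k => Nat.lcm e e' ∣ 1 + k * m)).card : ℝ) ≤
        N * (g e * g e' * (Nat.gcd e e' : ℝ)) + (R : ℝ) * R := by
    intro e he e' he'
    have he0 := hEpos e he
    have he0' := hEpos e' he'
    have hl0 : 0 < Nat.lcm e e' := Nat.lcm_pos he0 he0'
    have hc : Nat.Coprime (Nat.lcm e e') m := by
      have h1 : Nat.Coprime (e * e') m := by
        apply hm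
        rw [hq.dvd_mul]
        simp only [hE, Finset.mem_filter] at he he'
        tauto
      exact h1.coprime_dvd_left (Nat.lcm_dvd_mul e e')
    have hcnt := cc_count hl0 hc N N
    set c : ℝ := (((Finset.Ico N (N + N)).filter (fun k => Nat.lcm e e' ∣ 1 + k * m)).card : ℝ)
    have hgl : (Nat.gcd e e' : ℝ) * (Nat.lcm e e' : ℝ) = e * e' := by
      exact_mod_cast Nat.gcd_mul_lcm e e'
    have hl0' : (0 : ℝ) < Nat.lcm e e' := by exact_mod_cast hl0
    have h1 : ((e : ℝ) * g e) * ((e' : ℝ) * g e') * (N / (Nat.lcm e e' : ℝ)) =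
        N * (g e * g e' * (Nat.gcd e e' : ℝ)) := by
      field_simp
      linear_combination (-(N : ℝ) * g e * g e') * hgl
    have h2 : ((e : ℝ) * g e) * ((e' : ℝ) * g e') * (c - N / (Nat.lcm e e' : ℝ)) ≤ R * R := by
      refine (le_abs_self _).trans ?_
      rw [abs_mul, abs_mul]
      calc _ ≤ (R : ℝ) * R * 1 := by
            gcongr
            · exact hlam e he
            · exact hlam e' he'
        _ = _ := by ring
    linear_combination h2 + h1
  calc _ ≤ ∑ e ∈ E, ∑ e' ∈ E, (N * (g e * g e' * (Nat.gcd e e' : ℝ)) + (R : ℝ) * R) :=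
        Finset.sum_le_sum (fun e he => Finset.sum_le_sum (fun e' he' => hterm e he e' he'))
    _ = N * (∑ e ∈ E, ∑ e' ∈ E, g e * g e' * (Nat.gcd e e' : ℝ)) +
        (E.card : ℝ) * E.card * (R * R) := by
        simp only [Finset.sum_add_distrib, Finset.mul_sum, Finset.sum_const, nsmul_eq_mul]
        ring
    _ ≤ N * L + R * R * (R * R) := by gcongr
    _ = _ := by ring

lemma cc_L {q R : ℕ} (hq : q.Prime) :
    (∑ n ∈ Finset.Icc 1 R, (1 : ℝ) / n) ≤
      4 * ∑ d ∈ (Finset.Icc 1 R).filter (fun d => ¬ q ∣ d ∧ Squarefree d), (1 : ℝ) / d := by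
  set D := (Finset.Icc 1 R).filter (fun d => ¬ q ∣ d ∧ Squarefree d) with hD
  set E := (Finset.Icc 1 R).filter (fun d => ¬ q ∣ d) with hE
  have h1 : ∑ n ∈ (Finset.Icc 1 R).filter (fun d => q ∣ d), (1 : ℝ) / n ≤
      ∑ n ∈ E, (1 : ℝ) / n := by
    set M := (Finset.Icc 1 R).filter (fun d => q ∣ d) with hM
    have hM2 : ∀ n ∈ M, 2 ≤ n := by
      intro n hn
      simp only [hM, Finset.mem_filter, Finset.mem_Icc] at hn
      exact hq.two_le.trans (Nat.le_of_dvd (by omega) hn.2)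
    have h2 : ∑ n ∈ M, (1 : ℝ) / n ≤ ∑ n ∈ M, (1 : ℝ) / ((n - 1 : ℕ) : ℝ) := by
      apply Finset.sum_le_sum
      intro n hn
      have := hM2 n hn
      have h3 : (0 : ℝ) < ((n - 1 : ℕ) : ℝ) := by
        exact_mod_cast (by omega : 0 < n - 1)
      apply one_div_le_one_div_of_le h3
      exact_mod_cast Nat.sub_le n 1
    refine h2.trans ?_
    rw [← Finset.sum_image (f := fun n : ℕ => (1 : ℝ) / n) (g := fun n => n - 1) (s := M)]
    · apply Finset.sum_le_sum_of_subset_of_nonneg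
      · intro e he
        simp only [Finset.mem_image] at he
        obtain ⟨n, hn, rfl⟩ := he
        have h3 := hM2 n hn
        simp only [hM, hE, Finset.mem_filter, Finset.mem_Icc] at hn ⊢
        refine ⟨by omega, fun h => ?_⟩
        have := (Nat.dvd_sub_iff_right (by omega) hn.2).1 h
        exact hq.not_dvd_one this
      · intros; positivity
    · intro x hx y hy hxy
      have := hM2 x hx
      have := hM2 y hy
      simp only at hxy
      omega
  have h2 : ∑ n ∈ E, (1 : ℝ) / n ≤ 2 * ∑ d ∈ D, (1 : ℝ) / d := by
    choose A B hAB hsf using Nat.sq_mul_squarefree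
    have h3 : ∑ n ∈ E, (1 : ℝ) / n =
        ∑ n ∈ E, (1 : ℝ) / ((B n : ℝ) ^ 2) * (1 / (A n : ℝ)) := by
      apply Finset.sum_congr rfl
      intro n _
      have : (n : ℝ) = (B n : ℝ) ^ 2 * A n := by exact_mod_cast (hAB n).symm
      rw [this, one_div_mul_one_div]
    rw [h3, ← Finset.sum_image (f := fun z : ℕ × ℕ => (1 : ℝ) / ((z.1 : ℝ) ^ 2) * (1 / (z.2 : ℝ)))
      (g := fun n => (B n, A n)) (s := E)]
    · have h4 : E.image (fun n => (B n, A n)) ⊆ Finset.Icc 1 R ×ˢ D := by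
        intro z hz
        simp only [Finset.mem_image] at hz
        obtain ⟨n, hn, rfl⟩ := hz
        simp only [hE, Finset.mem_filter, Finset.mem_Icc] at hn
        have hn0 : 0 < n := by omega
        have hA : A n ∣ n := ⟨B n ^ 2, by rw [mul_comm]; exact (hAB n).symm⟩
        have hB : B n ∣ n := ⟨B n * A n, by
          have := hAB n
          nlinarith⟩
        simp only [Finset.mem_product, hD, Finset.mem_filter, Finset.mem_Icc]
        exact ⟨⟨Nat.pos_of_dvd_of_pos hB hn0, (Nat.le_of_dvd hn0 hB).trans hn.1.2⟩,
          ⟨Nat.pos_of_dvd_of_pos hA hn0, (Nat.le_of_dvd hn0 hA).trans hn.1.2⟩,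
          fun h => hn.2 (h.trans hA), hsf n⟩
      refine (Finset.sum_le_sum_of_subset_of_nonneg h4 (by intros; positivity)).trans ?_
      rw [Finset.sum_product]
      simp only
      rw [← Finset.sum_mul_sum]
      apply mul_le_mul_of_nonneg_right
      · have := sum_Ioo_inv_sq_le (α := ℝ) 0 (R + 1)
        have h5 : Finset.Ioo 0 (R + 1) = Finset.Icc 1 R := by
          ext; simp only [Finset.mem_Ioo, Finset.mem_Icc]; omega
        rw [h5] at this
        simpa [one_div] using this
      · exact Finset.sum_nonneg (by intros; positivity)
    · intro x _ y _ hxy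
      simp only [Prod.mk.injEq] at hxy
      rw [← hAB x, ← hAB y, hxy.1, hxy.2]
  have h3 := Finset.sum_filter_add_sum_filter_not (Finset.Icc 1 R) (fun d => q ∣ d)
    (fun n : ℕ => (1 : ℝ) / n)
  linarith

lemma cc_block {q a : ℕ} (hq : q.Prime) (j : ℕ) :
    (((Finset.Ico (2 ^ j) (2 ^ j + 2 ^ j)).filter (fun k => (1 + k * q ^ a).Prime)).card : ℝ) ≤
      96 / ((j : ℝ) + 1) * 2 ^ j := by
  have hS := cc_sieve (q := q) (m := q ^ a) (R := 2 ^ (j / 4)) (N := 2 ^ j)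
    (fun e he => Nat.Coprime.pow_right a ((hq.coprime_iff_not_dvd.2 he).symm))
    (pow_pos hq.pos a) Nat.one_le_two_pow
    (Nat.pow_le_pow_right (by norm_num) (by omega)) hq _ rfl
  have hL := cc_L (R := 2 ^ (j / 4)) hq
  set L := ∑ d ∈ (Finset.Icc 1 (2 ^ (j / 4))).filter (fun d => ¬ q ∣ d ∧ Squarefree d), (1 : ℝ) / d
  set c : ℝ :=
    (((Finset.Ico (2 ^ j) (2 ^ j + 2 ^ j)).filter (fun k => (1 + k * q ^ a).Prime)).card : ℝ)
  have hL1 : 1 ≤ L := by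
    have h1 : 1 ∈ (Finset.Icc 1 (2 ^ (j / 4))).filter (fun d => ¬ q ∣ d ∧ Squarefree d) := by
      simp only [Finset.mem_filter, Finset.mem_Icc]
      exact ⟨⟨le_rfl, Nat.one_le_two_pow⟩, hq.not_dvd_one, squarefree_one⟩
    have := Finset.single_le_sum (f := fun d : ℕ => (1 : ℝ) / d)
      (fun i _ => by positivity) h1
    simp only [Nat.cast_one, div_one] at this
    exact this
  have hH : ((j / 4 : ℕ) : ℝ) / 2 ≤ ∑ n ∈ Finset.Icc (1 : ℕ) (2 ^ (j / 4)), (1 : ℝ) / (n : ℝ) := by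
    have h1 := log_add_one_le_harmonic (2 ^ (j / 4))
    rw [harmonic_eq_sum_Icc] at h1
    push_cast at h1
    have h2 : Real.log ((2 : ℝ) ^ (j / 4)) ≤ Real.log ((2 : ℝ) ^ (j / 4) + 1) :=
      Real.log_le_log (by positivity) (by linarith)
    rw [Real.log_pow] at h2
    have h3 := Real.log_two_gt_d9
    have h4 : (0 : ℝ) ≤ ((j / 4 : ℕ) : ℝ) := by positivity
    simp only [one_div]
    nlinarith
  have hj : (j : ℝ) + 1 ≤ 4 * ((j / 4 : ℕ) : ℝ) + 4 := by
    exact_mod_cast (by omega : j + 1 ≤ 4 * (j / 4) + 4)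
  have hLj : ((j : ℝ) + 1) / 36 ≤ L := by linarith
  have hR4 : (((2 ^ (j / 4) : ℕ) : ℝ)) ^ 4 ≤ 2 ^ j := by
    push_cast
    rw [← pow_mul]
    exact pow_le_pow_right₀ (by norm_num) (by omega)
  push_cast at hS hR4
  have hP : (0 : ℝ) < 2 ^ j := by positivity
  have h1 : c * L ≤ 2 * 2 ^ j := by
    have : (c * L) * L ≤ (2 * 2 ^ j) * L := by nlinarith
    exact le_of_mul_le_mul_right this (by linarith)
  have hc : 0 ≤ c := by positivity
  have hj0 : (0 : ℝ) < (j : ℝ) + 1 := by positivity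
  rw [div_mul_eq_mul_div, le_div_iff₀ hj0]
  nlinarith

lemma cc_recip {q a X : ℕ} (hq : q.Prime) :
    ∑ k ∈ (Finset.Icc 1 X).filter (fun k => (1 + k * q ^ a).Prime), (1 : ℝ) / k ≤
      96 * (1 + Real.log ((Nat.log 2 X + 1 : ℕ) : ℝ)) := by
  set P := (Finset.Icc 1 X).filter (fun k => (1 + k * q ^ a).Prime) with hP
  have hmaps : ∀ k ∈ P, Nat.log 2 k ∈ Finset.range (Nat.log 2 X + 1) := by
    intro k hk
    simp only [hP, Finset.mem_filter, Finset.mem_Icc] at hk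
    rw [Finset.mem_range]
    exact Nat.lt_succ_of_le (Nat.log_mono_right hk.1.2)
  rw [← Finset.sum_fiberwise_of_maps_to hmaps]
  have h1 : ∀ j ∈ Finset.range (Nat.log 2 X + 1),
      ∑ k ∈ P.filter (fun k => Nat.log 2 k = j), (1 : ℝ) / k ≤ 96 * ((j : ℝ) + 1)⁻¹ := by
    intro j _
    have hsub : P.filter (fun k => Nat.log 2 k = j) ⊆
        (Finset.Ico (2 ^ j) (2 ^ j + 2 ^ j)).filter (fun k => (1 + k * q ^ a).Prime) := by
      intro k hk
      simp only [hP, Finset.mem_filter, Finset.mem_Icc, Finset.mem_Ico] at hk ⊢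
      obtain ⟨⟨⟨h1, h2⟩, h3⟩, rfl⟩ := hk
      refine ⟨⟨Nat.pow_log_le_self 2 (by omega), ?_⟩, h3⟩
      have := Nat.lt_pow_succ_log_self (b := 2) (by norm_num) k
      rw [pow_succ] at this
      omega
    refine (Finset.sum_le_sum_of_subset_of_nonneg hsub (by intros; positivity)).trans ?_
    have h2 : ∀ k ∈ (Finset.Ico (2 ^ j) (2 ^ j + 2 ^ j)).filter (fun k => (1 + k * q ^ a).Prime),
        (1 : ℝ) / k ≤ 1 / 2 ^ j := by
      intro k hk
      simp only [Finset.mem_filter, Finset.mem_Ico] at hk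
      apply one_div_le_one_div_of_le (by positivity)
      exact_mod_cast hk.1.1
    refine (Finset.sum_le_sum h2).trans ?_
    rw [Finset.sum_const, nsmul_eq_mul, mul_one_div, div_le_iff₀ (by positivity)]
    exact cc_block hq j
  refine (Finset.sum_le_sum h1).trans ?_
  rw [← Finset.mul_sum]
  have h2 := harmonic_le_one_add_log (Nat.log 2 X + 1)
  rw [harmonic] at h2
  push_cast at h2 ⊢
  linarith

theorem count_carmichael_divisible :
    ∃ C : ℝ, 0 < C ∧ ∀ q : ℕ, q.Prime → ∀ a : ℕ, 1 ≤ a →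
      ∀ x : ℝ, Real.exp (Real.exp 1) ≤ x →
      (((Finset.Icc 1 ⌊x⌋₊).filter (fun n : ℕ => q ^ a ∣ carmichael n)).card : ℝ) ≤
        C * x * Real.log (Real.log x) / (q : ℝ) ^ a := by
  refine ⟨385, by norm_num, ?_⟩
  intro q hq a ha x hx
  have he1 : (2 : ℝ) ≤ Real.exp 1 := by
    have := Real.add_one_le_exp (1 : ℝ); linarith
  have hx0 : 0 < x := (Real.exp_pos _).trans_le hx
  have hlx : Real.exp 1 ≤ Real.log x := (Real.le_log_iff_exp_le hx0).2 hx
  have hlx0 : 0 < Real.log x := by linarith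
  have hllx : 1 ≤ Real.log (Real.log x) := (Real.le_log_iff_exp_le hlx0).2 hlx
  have hx1 : 1 ≤ x := by
    have := Real.add_one_le_exp (Real.exp 1); linarith
  set X := ⌊x⌋₊ with hXdef
  have hX : 1 ≤ X := Nat.one_le_floor_iff _ |>.2 hx1
  have hXx : (X : ℝ) ≤ x := Nat.floor_le hx0.le
  have hXpos : (0 : ℝ) < X := by exact_mod_cast hX
  set P := (Finset.Icc 1 X).filter (fun k => (1 + k * q ^ a).Prime) with hP
  have hqpos : (0 : ℝ) < (q : ℝ) ^ a := by
    have : (0 : ℝ) < q := by exact_mod_cast hq.pos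
    positivity
  have hmult : ∀ d : ℕ, (((Finset.Icc 1 X).filter (fun n => d ∣ n)).card : ℝ) ≤ x / d := by
    intro d
    have h1 : Finset.Icc 1 X = Finset.Ioc 0 X := by
      ext; simp only [Finset.mem_Ioc, Finset.mem_Icc]; omega
    rw [h1, Nat.Ioc_filter_dvd_card_eq_div]
    exact Nat.cast_div_le.trans (by gcongr)
  have hsub : (Finset.Icc 1 X).filter (fun n : ℕ => q ^ a ∣ carmichael n) ⊆
      (Finset.Icc 1 X).filter (fun n => q ^ (a + 1) ∣ n) ∪
      P.biUnion (fun k => (Finset.Icc 1 X).filter (fun n => (1 + k * q ^ a) ∣ n)) := by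
    intro n hn
    simp only [Finset.mem_filter, Finset.mem_Icc, Finset.mem_union, Finset.mem_biUnion] at hn ⊢
    rcases cc_structure hq ha (by omega) hn.2 with h | ⟨p, hp, hpn, k, hk⟩
    · left; exact ⟨hn.1, h⟩
    · right
      have hp1 : p = 1 + k * q ^ a := by
        have := hp.one_lt
        rw [mul_comm k]; omega
      have hk0 : k ≠ 0 := by
        rintro rfl
        rw [hp1] at hp
        simp only [zero_mul, add_zero] at hp
        exact Nat.not_prime_one hp
      have hpX : p ≤ X := (Nat.le_of_dvd (by omega) hpn).trans hn.1.2
      have hkp : k ≤ k * q ^ a := Nat.le_mul_of_pos_right _ (pow_pos hq.pos a)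
      refine ⟨k, ?_, hn.1, hp1 ▸ hpn⟩
      simp only [hP, Finset.mem_filter, Finset.mem_Icc]
      exact ⟨⟨by omega, by omega⟩, hp1 ▸ hp⟩
  have hcard : (((Finset.Icc 1 X).filter (fun n : ℕ => q ^ a ∣ carmichael n)).card : ℝ) ≤
      x / ((q ^ (a + 1) : ℕ) : ℝ) + ∑ k ∈ P, x / ((1 + k * q ^ a : ℕ) : ℝ) := by
    have h1 := (Finset.card_le_card hsub).trans (Finset.card_union_le _ _)
    have h2 := Finset.card_biUnion_le (s := P)
      (t := fun k => (Finset.Icc 1 X).filter (fun n => (1 + k * q ^ a) ∣ n))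
    have h3 := h1.trans (Nat.add_le_add_left h2 _)
    have h4 : (((Finset.Icc 1 X).filter (fun n : ℕ => q ^ a ∣ carmichael n)).card : ℝ) ≤
      (((Finset.Icc 1 X).filter (fun n => q ^ (a + 1) ∣ n)).card : ℝ) +
      ∑ k ∈ P, (((Finset.Icc 1 X).filter (fun n => (1 + k * q ^ a) ∣ n)).card : ℝ) := by
      exact_mod_cast h3
    refine h4.trans (add_le_add (hmult _) (Finset.sum_le_sum fun k _ => hmult _))
  have hfirst : x / ((q ^ (a + 1) : ℕ) : ℝ) ≤ x / (q : ℝ) ^ a := by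
    push_cast
    apply div_le_div_of_nonneg_left hx0.le hqpos
    exact pow_le_pow_right₀ (by exact_mod_cast hq.one_le) (by omega)
  have hsecond : ∑ k ∈ P, x / ((1 + k * q ^ a : ℕ) : ℝ) ≤
      x / (q : ℝ) ^ a * ∑ k ∈ P, (1 : ℝ) / k := by
    rw [Finset.mul_sum]
    apply Finset.sum_le_sum
    intro k hk
    simp only [hP, Finset.mem_filter, Finset.mem_Icc] at hk
    have hk0 : (0 : ℝ) < k := by exact_mod_cast (by omega : 0 < k)
    rw [div_mul_div_comm, mul_one]
    apply div_le_div_of_nonneg_left hx0.le (by positivity)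
    push_cast
    linarith
  have hrec := cc_recip (a := a) (X := X) hq
  have hlog : Real.log ((Nat.log 2 X + 1 : ℕ) : ℝ) ≤ 3 * Real.log (Real.log x) := by
    have h1 : ((2 : ℝ)) ^ (Nat.log 2 X) ≤ x := by
      have : 2 ^ Nat.log 2 X ≤ X := Nat.pow_log_le_self 2 (by omega)
      have h' : ((2 : ℝ)) ^ (Nat.log 2 X) ≤ X := by exact_mod_cast this
      linarith
    have h2 := Real.log_le_log (by positivity) h1
    rw [Real.log_pow] at h2
    have h3 := Real.log_two_gt_d9
    have h4 : (0 : ℝ) ≤ (Nat.log 2 X : ℝ) := by positivity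
    have h5 : ((Nat.log 2 X + 1 : ℕ) : ℝ) ≤ Real.exp 1 * Real.exp 1 * Real.log x := by
      push_cast
      have : (4 : ℝ) ≤ Real.exp 1 * Real.exp 1 := by nlinarith
      nlinarith
    have h6 := Real.log_le_log (by positivity) h5
    rw [Real.log_mul (by positivity) (by positivity), ← Real.exp_add, Real.log_exp] at h6
    linarith
  have hfin : ∑ k ∈ P, (1 : ℝ) / k ≤ 384 * Real.log (Real.log x) := by linarith
  have hxq : 0 ≤ x / (q : ℝ) ^ a := by positivity
  calc _ ≤ x / (q : ℝ) ^ a + x / (q : ℝ) ^ a * ∑ k ∈ P, (1 : ℝ) / k := by linarith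
    _ ≤ x / (q : ℝ) ^ a * Real.log (Real.log x) +
        x / (q : ℝ) ^ a * (384 * Real.log (Real.log x)) := by
        gcongr
        exact le_mul_of_one_le_right hxq hllx
    _ = _ := by ring
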